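/- arXiv:0805.3237 — 4 statements merged into one kernel-verified Lean document; each statement's English description precedes it below -/
import Mathlib

section
/- Let γ be a work-limited parallelism profile on m processors and let u be a real with 0 < u ≤ γ(m). Let k = 0 if u ≤ γ(1), and otherwise k = max{1 ≤ j ≤ m : γ(j) < u}; note k < m. Then for every family of nonnegative reals a(0), a(1), …, a(m) satisfying a(0) + a(1) + ⋯ + a(m) ≤ 1 and γ(0)·a(0) + γ(1)·a(1) + ⋯ + γ(m)·a(m) ≥ u, one has 0·a(0) + 1·a(1) + ⋯ + m·a(m) ≥ k + (u − γ(k))/(γ(k+1) − γ(k)). (Here a(j) is the duration, inside a unit-length interval, during which the task is executed on exactly j processors; the conclusion lower-bounds the task's total processor use per unit time.) -/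
/-!
A profile with nonincreasing increments lies below each of its discrete tangent lines
`j ↦ γ k + (j - k) * (γ (k + 1) - γ k)`; the ratio condition is what makes the increments
nonincreasing already from `j = 0`. Averaging the tangent bound against the durations `a j` bounds
the work by an affine function of the processor use. Its constant term is nonnegative because
`0 ≤ γ 0`, so total duration at most `1` suffices, and solving for the processor use gives the
bound, for every `k < m`.
-/

open fwdDiff

section OrderedRing

variable {R : Type*} [CommRing R] [LinearOrder R] [IsStrictOrderedRing R]

theorem le_add_mul_fwdDiff_of_antitoneOn {f : ℕ → R} {m j k : ℕ}
    (hf : AntitoneOn (Δ_[1] f) (Set.Iio m)) (hj : j ≤ m) (hk : k < m) :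
    f j ≤ f k + (j - k) * Δ_[1] f k := by
  rcases le_total k j with hkj | hjk
  · induction j, hkj using Nat.le_induction with
    | base => simp
    | succ j hkj ih =>
      have increment_le : f (j + 1) - f j ≤ Δ_[1] f k := hf hk hj hkj
      push_cast
      linarith [ih (by lia)]
  · clear hj
    induction hjk using Nat.decreasingInduction with
    | self => simp
    | of_succ j hjk ih =>
      have le_increment : Δ_[1] f k ≤ f (j + 1) - f j := hf (hjk.trans hk) hk hjk.le
      push_cast at ih
      linarith

theorem sum_mul_le_add_mul_sum_of_le_affine {ι : Type*} {s : Finset ι} {w f x : ι → R} {b c : R}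
    (hb : 0 ≤ b) (hw : ∀ i ∈ s, 0 ≤ w i) (hw_sum : ∑ i ∈ s, w i ≤ 1)
    (hf : ∀ i ∈ s, f i ≤ b + c * x i) :
    ∑ i ∈ s, f i * w i ≤ b + c * ∑ i ∈ s, x i * w i :=
  calc ∑ i ∈ s, f i * w i
      ≤ ∑ i ∈ s, (b + c * x i) * w i :=
        Finset.sum_le_sum fun i hi ↦ mul_le_mul_of_nonneg_right (hf i hi) (hw i hi)
    _ = b * ∑ i ∈ s, w i + c * ∑ i ∈ s, x i * w i := by
        simp only [Finset.mul_sum, ← Finset.sum_add_distrib, add_mul, mul_assoc]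
    _ ≤ b + c * ∑ i ∈ s, x i * w i := by
        gcongr
        exact mul_le_of_le_one_right hb hw_sum

end OrderedRing

section OrderedField

variable {𝕜 : Type*} [Field 𝕜] [LinearOrder 𝕜] [IsStrictOrderedRing 𝕜] {m : ℕ} {γ : ℕ → 𝕜}

theorem antitoneOn_fwdDiff_of_div_le_two (h0 : γ 0 = 0) (h1 : 0 < γ 1)
    (hratio : 1 < m → γ 2 / γ 1 ≤ 2)
    (hconc : ∀ j, 1 ≤ j → j + 1 < m → γ (j + 2) - γ (j + 1) ≤ γ (j + 1) - γ j) :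
    AntitoneOn (Δ_[1] γ) (Set.Iio m) := by
  refine antitoneOn_of_add_one_le Set.ordConnected_Iio fun j _ _ hj ↦ ?_
  rcases j.eq_zero_or_pos with rfl | hj_pos
  · have le_two_mul : γ 2 ≤ 2 * γ 1 := (div_le_iff₀ h1).1 (hratio hj)
    simp only [fwdDiff, zero_add, one_add_one_eq_two, h0]
    linarith
  · exact hconc j hj_pos hj

theorem stmt4_general {k : ℕ} {a : ℕ → 𝕜} {u : 𝕜} (h0 : 0 ≤ γ 0)
    (hconc : AntitoneOn (Δ_[1] γ) (Set.Iio m)) (hkm : k < m) (hk : γ k < γ (k + 1))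
    (ha : ∀ j ≤ m, 0 ≤ a j) (hsum : ∑ j ∈ Finset.range (m + 1), a j ≤ 1)
    (hwork : u ≤ ∑ j ∈ Finset.range (m + 1), γ j * a j) :
    k + (u - γ k) / (γ (k + 1) - γ k) ≤ ∑ j ∈ Finset.range (m + 1), j * a j := by
  set d := γ (k + 1) - γ k
  have tangent_bound (j : ℕ) (hj : j ≤ m) : γ j ≤ (γ k - d * k) + d * j := by
    have : γ j ≤ γ k + (j - k) * d := le_add_mul_fwdDiff_of_antitoneOn hconc hj hkm
    linarith
  have intercept_nonneg : 0 ≤ γ k - d * k :=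
    h0.trans (by simpa using tangent_bound 0 m.zero_le)
  have work_le := hwork.trans <| sum_mul_le_add_mul_sum_of_le_affine intercept_nonneg
    (fun j hj ↦ ha j (Finset.mem_range_succ_iff.1 hj)) hsum
    (fun j hj ↦ tangent_bound j (Finset.mem_range_succ_iff.1 hj))
  rw [← le_sub_iff_add_le', div_le_iff₀ (sub_pos.2 hk)]
  linarith

end OrderedField

theorem findGreatest_lt_of_not {P : ℕ → Prop} [DecidablePred P] {m : ℕ} (hm : 0 < m)
    (hP : ¬ P m) : Nat.findGreatest P m < m :=
  (Nat.findGreatest_le m).lt_of_ne fun h ↦ hP (Nat.findGreatest_of_ne_zero h hm.ne')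

/-- For a work-limited parallelism profile `γ` on `m` processors
(`γ 0 = 0`, `γ` strictly increasing on `{0,…,m}`, sublinear ratios, nonincreasing
consecutive differences) and a utilization `0 < u ≤ γ m`, with
`k = 0` if `u ≤ γ 1` and otherwise `k = max{1 ≤ j ≤ m : γ j < u}`:
any durations `a 0, …, a m ≥ 0` within a unit interval
(`∑ a j ≤ 1`) achieving work at least `u` (`∑ γ j · a j ≥ u`) have total processor
use `∑ j · a j` at least `k + (u − γ k)/(γ (k+1) − γ k)`. -/
theorem stmt4 (m : ℕ) (hm : 1 ≤ m) (γ : ℕ → ℝ)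
    (h0 : γ 0 = 0)
    (hmono : ∀ j : ℕ, j < m → γ j < γ (j + 1))
    (hratio : ∀ j j' : ℕ, 1 ≤ j → j < j' → j' ≤ m →
      γ j' / γ j < (j' : ℝ) / (j : ℝ))
    (hconv : ∀ j j' : ℕ, 1 ≤ j → j < j' → j' < m →
      γ (j' + 1) - γ j' ≤ γ (j + 1) - γ j)
    (u : ℝ) (hu : 0 < u) (hum : u ≤ γ m)
    (k : ℕ)
    (hk : k = if u ≤ γ 1 then 0 else Nat.findGreatest (fun j => γ j < u) m)
    (a : ℕ → ℝ)
    (ha : ∀ j : ℕ, j ≤ m → 0 ≤ a j)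
    (hsum : ∑ j ∈ Finset.range (m + 1), a j ≤ 1)
    (hwork : u ≤ ∑ j ∈ Finset.range (m + 1), γ j * a j) :
    (k : ℝ) + (u - γ k) / (γ (k + 1) - γ k) ≤
      ∑ j ∈ Finset.range (m + 1), (j : ℝ) * a j := by
  have hkm : k < m := by
    rw [hk]
    split_ifs
    exacts [hm, findGreatest_lt_of_not hm hum.not_gt]
  have concave : AntitoneOn (Δ_[1] γ) (Set.Iio m) :=
    antitoneOn_fwdDiff_of_div_le_two h0 (by simpa only [h0] using hmono 0 hm)
      (fun hm2 ↦ by simpa using (hratio 1 2 le_rfl one_lt_two hm2).le)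
      fun j hj hjm ↦ hconv j (j + 1) hj j.lt_succ_self hjm
  exact stmt4_general h0.ge concave hkm (hmono k hkm) ha hsum hwork
end

section
/- (Necessary condition for feasibility.) Consider n tasks on m identical processors; task i has utilization u_i with 0 < u_i ≤ γ_i(m), where γ_i is a work-limited parallelism profile on m processors. For task i let k_i = 0 if u_i ≤ γ_i(1) and otherwise k_i = max{1 ≤ j ≤ m : γ_i(j) < u_i}, and let λ_i = k_i + (u_i − γ_i(k_i))/(γ_i(k_i+1) − γ_i(k_i)). Suppose there exist a real P > 0 and a measurable schedule σ : ℝ → (Fin m → Option (Fin n)) such that for every task i, the integral over [0, P) of s ↦ γ_i(c_i(s)) is at least u_i·P, where c_i(s) denotes the number of processors p with σ(s)(p) = some i. Then λ_1 + λ_2 + ⋯ + λ_n ≤ m. -/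
open MeasureTheory

/-- Discrete measurable-space structure on `Option α`. -/
instance optionMeasurableSpace {α : Type*} [MeasurableSpace α] :
    MeasurableSpace (Option α) := ⊤

/-!
Discrete concavity puts the graph of each profile `γᵢ` on `{0, …, m}` below the line through its
points at `kᵢ` and `kᵢ + 1`, and `λᵢ` is the abscissa at which this line reaches height `uᵢ`.
At a uniformly random time in `[0, P)` the expected rate of task `i` is at least `uᵢ`; pushing this
through the line shows that task `i` holds at least `λᵢ` processors in expectation. No more than
`m` processors are ever in use, so the `λᵢ` sum to at most `m`.
-/

section Profile

variable {𝕜 : Type*} [Field 𝕜] [LinearOrder 𝕜] [IsStrictOrderedRing 𝕜] {m k : ℕ} {g : ℕ → 𝕜}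

/-- A work-limited parallelism profile on `m` processors: `g j` is the rate at which a task
progresses on `j` processors. Values of `g` beyond `m` are unconstrained. -/
structure IsWorkLimitedProfile (m : ℕ) (g : ℕ → 𝕜) : Prop where
  zero : g 0 = 0
  lt_add_one : ∀ j, j < m → g j < g (j + 1)
  div_lt_div : ∀ j j', 1 ≤ j → j < j' → j' ≤ m → g j' / g j < (j' : 𝕜) / j
  increment_le : ∀ j j', 1 ≤ j → j < j' → j' < m → g (j' + 1) - g j' ≤ g (j + 1) - g j

/-- The abscissa at which the line through `(k, g k)` and `(k + 1, g (k + 1))` reaches height `u`.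
For the paper's index `kᵢ` this is `λᵢ`, the number of processors on which task `i` would have to
run permanently, if fractions of a processor were allowed. -/
def chordInverse (g : ℕ → 𝕜) (k : ℕ) (u : 𝕜) : 𝕜 :=
  k + (u - g k) / (g (k + 1) - g k)

theorem chordInverse_le_iff (hk : g k < g (k + 1)) {u x : 𝕜} :
    chordInverse g k u ≤ x ↔ u ≤ g k + (x - k) * (g (k + 1) - g k) := by
  rw [chordInverse, ← le_sub_iff_add_le', div_le_iff₀ (sub_pos.2 hk), sub_le_iff_le_add']

theorem IsWorkLimitedProfile.antitoneOn_increment (hg : IsWorkLimitedProfile m g) :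
    AntitoneOn (fun j ↦ g (j + 1) - g j) (Set.Iio m) := by
  refine antitoneOn_of_add_one_le Set.ordConnected_Iio fun j _ _ (hj : j + 1 < m) ↦ ?_
  -- `increment_le` says nothing about the increment at `0`, which the ratio condition controls.
  obtain rfl | hj_pos := j.eq_zero_or_pos
  · have g_one_pos : 0 < g 1 := hg.zero ▸ hg.lt_add_one 0 (by lia)
    have g_two_lt : g 2 < 2 * g 1 := by
      simpa [div_lt_iff₀ g_one_pos] using hg.div_lt_div 1 2 le_rfl one_lt_two hj
    simp only [zero_add, one_add_one_eq_two, hg.zero]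
    linarith
  · exact hg.increment_le j (j + 1) hj_pos j.lt_succ_self hj

theorem le_chord_of_antitoneOn_increment
    (hg : AntitoneOn (fun j ↦ g (j + 1) - g j) (Set.Iio m)) (hk : k < m) {c : ℕ} (hc : c ≤ m) :
    g c ≤ g k + (c - k) * (g (k + 1) - g k) := by
  -- Up to a constant, the excess of `g` over the line; it is largest at `k`.
  let excess : ℕ → 𝕜 := fun j ↦ g j - j * (g (k + 1) - g k)
  suffices excess_le : excess c ≤ excess k by
    simp only [excess] at excess_le
    linarith
  obtain hck | hkc := le_total c k
  · have excess_mono : MonotoneOn excess (Set.Iic k) := by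
      refine monotoneOn_of_le_add_one Set.ordConnected_Iic fun j _ _ (hj : j + 1 ≤ k) ↦ ?_
      have increment_ge : g (k + 1) - g k ≤ g (j + 1) - g j :=
        hg (Set.mem_Iio.2 (by lia)) hk (by lia)
      simp only [excess, Nat.cast_add_one]
      linarith
    exact excess_mono hck Set.self_mem_Iic hck
  · have excess_anti : AntitoneOn excess (Set.Icc k m) := by
      refine antitoneOn_of_add_one_le Set.ordConnected_Icc fun j _ hj hj' ↦ ?_
      have increment_le : g (j + 1) - g j ≤ g (k + 1) - g k := hg hk hj'.2 hj.1
      simp only [excess, Nat.cast_add_one]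
      linarith
    exact excess_anti ⟨le_rfl, hk.le⟩ ⟨hkc, hc⟩ hkc

end Profile

section Schedule

variable {ι π : Type*} [DecidableEq ι] [Fintype π]

/-- The number of processors that the assignment `a` of tasks to processors gives to task `i`;
`a p = none` means that processor `p` is idle. -/
def processorCount (a : π → Option ι) (i : ι) : ℕ :=
  (Finset.univ.filter fun p ↦ a p = some i).card

theorem processorCount_le (a : π → Option ι) (i : ι) : processorCount a i ≤ Fintype.card π :=
  Finset.card_le_univ _

theorem sum_processorCount_le [Fintype ι] (a : π → Option ι) :
    ∑ i, processorCount a i ≤ Fintype.card π :=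
  calc ∑ i, processorCount a i
      = ∑ o ∈ Finset.univ.map .some, (Finset.univ.filter fun p ↦ a p = o).card := by
        rw [Finset.sum_map]; rfl
    _ = (Finset.univ.filter fun p ↦ a p ∈ Finset.univ.map .some).card :=
        Finset.sum_card_fiberwise_eq_card_filter ..
    _ ≤ Fintype.card π := Finset.card_le_univ _

theorem measurable_processorCount {Ω : Type*} [MeasurableSpace Ω] {σ : Ω → π → Option ι} {i : ι}
    (hσ : ∀ p, MeasurableSet {s | σ s p = some i}) :
    Measurable fun s ↦ processorCount (σ s) i := by
  simp only [processorCount, Finset.card_filter]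
  exact Finset.measurable_sum _ fun p _ ↦ Measurable.ite (hσ p) measurable_const measurable_const

end Schedule

section Expectation

variable {Ω : Type*} [MeasurableSpace Ω] {μ : Measure Ω}

theorem integrable_comp_of_nat_le [IsFiniteMeasure μ] {E : Type*} [NormedAddCommGroup E]
    {N : Ω → ℕ} {m : ℕ} (hN : Measurable N) (hNm : ∀ s, N s ≤ m) (g : ℕ → E) :
    Integrable (fun s ↦ g (N s)) μ := by
  refine .of_bound (StronglyMeasurable.of_discrete.comp_measurable hN).aestronglyMeasurable
    (∑ j ∈ Finset.range (m + 1), ‖g j‖) (.of_forall fun s ↦ ?_)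
  exact Finset.single_le_sum (f := fun j ↦ ‖g j‖) (fun _ _ ↦ norm_nonneg _)
    (Finset.mem_range_succ_iff.2 (hNm s))

theorem chordInverse_le_integral [IsProbabilityMeasure μ] {g : ℕ → ℝ} {m k : ℕ} {u : ℝ}
    (hg : AntitoneOn (fun j ↦ g (j + 1) - g j) (Set.Iio m)) (hkm : k < m) (hk : g k < g (k + 1))
    {N : Ω → ℕ} (hN : Measurable N) (hNm : ∀ s, N s ≤ m) (hu : u ≤ ∫ s, g (N s) ∂μ) :
    chordInverse g k u ≤ ∫ s, (N s : ℝ) ∂μ := by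
  have integrable_count : Integrable (fun s ↦ (N s : ℝ)) μ := integrable_comp_of_nat_le hN hNm _
  have integrable_chord : Integrable (fun s ↦ ((N s : ℝ) - k) * (g (k + 1) - g k)) μ :=
    (integrable_count.sub (integrable_const _)).mul_const _
  rw [chordInverse_le_iff hk]
  calc u ≤ ∫ s, g (N s) ∂μ := hu
    _ ≤ ∫ s, (g k + ((N s : ℝ) - k) * (g (k + 1) - g k)) ∂μ :=
        integral_mono (integrable_comp_of_nat_le hN hNm g)
          ((integrable_const _).add integrable_chord)
          fun s ↦ le_chord_of_antitoneOn_increment hg hkm (hNm s)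
    _ = g k + (∫ s, (N s : ℝ) ∂μ - k) * (g (k + 1) - g k) := by
        rw [integral_add (integrable_const _) integrable_chord, integral_mul_const,
          integral_sub integrable_count (integrable_const _)]
        simp

theorem sum_integral_processorCount_le [IsProbabilityMeasure μ] {ι π : Type*} [Fintype ι]
    [DecidableEq ι] [Fintype π] {σ : Ω → π → Option ι}
    (hσ : ∀ p i, MeasurableSet {s | σ s p = some i}) :
    ∑ i, ∫ s, (processorCount (σ s) i : ℝ) ∂μ ≤ Fintype.card π := by
  have integrable_count (i : ι) : Integrable (fun s ↦ (processorCount (σ s) i : ℝ)) μ :=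
    integrable_comp_of_nat_le (measurable_processorCount (hσ · i))
      (fun s ↦ processorCount_le (σ s) i) _
  calc ∑ i, ∫ s, (processorCount (σ s) i : ℝ) ∂μ
      = ∫ s, ∑ i, (processorCount (σ s) i : ℝ) ∂μ :=
        (integral_finsetSum _ fun i _ ↦ integrable_count i).symm
    _ ≤ ∫ _, (Fintype.card π : ℝ) ∂μ :=
        integral_mono (integrable_finsetSum _ fun i _ ↦ integrable_count i) (integrable_const _)
          fun s ↦ mod_cast sum_processorCount_le (σ s)
    _ = Fintype.card π := by simp

theorem stmt5_general [IsProbabilityMeasure μ] {ι π : Type*} [Fintype ι] [DecidableEq ι]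
    [Fintype π] {γ : ι → ℕ → ℝ} {u : ι → ℝ} {k : ι → ℕ}
    (hγ : ∀ i, AntitoneOn (fun j ↦ γ i (j + 1) - γ i j) (Set.Iio (Fintype.card π)))
    (hkm : ∀ i, k i < Fintype.card π) (hk : ∀ i, γ i (k i) < γ i (k i + 1))
    {σ : Ω → π → Option ι} (hσ : ∀ p i, MeasurableSet {s | σ s p = some i})
    (hu : ∀ i, u i ≤ ∫ s, γ i (processorCount (σ s) i) ∂μ) :
    ∑ i, chordInverse (γ i) (k i) (u i) ≤ Fintype.card π :=
  calc ∑ i, chordInverse (γ i) (k i) (u i)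
      ≤ ∑ i, ∫ s, (processorCount (σ s) i : ℝ) ∂μ :=
        Finset.sum_le_sum fun i _ ↦ chordInverse_le_integral (hγ i) (hkm i) (hk i)
          (measurable_processorCount (hσ · i)) (fun s ↦ processorCount_le (σ s) i) (hu i)
    _ ≤ Fintype.card π := sum_integral_processorCount_le hσ

end Expectation

theorem ite_findGreatest_lt {α : Type*} [LinearOrder α] {g : ℕ → α} {u : α} {m : ℕ} (hm : 0 < m)
    (hu : u ≤ g m) : (if u ≤ g 1 then 0 else Nat.findGreatest (fun j ↦ g j < u) m) < m := by
  split_ifs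
  · exact hm
  · exact (Nat.findGreatest_le m).lt_of_ne fun h ↦
      hu.not_gt (Nat.findGreatest_of_ne_zero (P := fun j ↦ g j < u) h hm.ne')

theorem measurableSet_setOf_eq_some {Ω ι π : Type*} [MeasurableSpace Ω] [MeasurableSpace ι]
    {σ : Ω → π → Option ι} (hσ : Measurable σ) (p : π) (i : ι) :
    MeasurableSet {s | σ s p = some i} :=
  (measurable_pi_apply p).comp hσ (MeasurableSpace.measurableSet_top (s := {some i}))

theorem isProbabilityMeasure_cond_Ico_zero {P : ℝ} (hP : 0 < P) :
    IsProbabilityMeasure (ProbabilityTheory.cond volume (Set.Ico 0 P)) :=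
  ProbabilityTheory.cond_isProbabilityMeasure_of_finite (by simpa using hP) (by simp)

theorem integral_cond_Ico_zero {P : ℝ} (hP : 0 ≤ P) (f : ℝ → ℝ) :
    ∫ s, f s ∂ProbabilityTheory.cond volume (Set.Ico 0 P) = (∫ s in Set.Ico 0 P, f s) / P := by
  simp [ProbabilityTheory.cond, integral_smul_measure, hP, div_eq_inv_mul]

/-- Necessary condition for feasibility: if a measurable schedule
`σ` on `m` processors gives every task `i` (with work-limited parallelism profile
`γ i` and utilization `u i`) work at least `u i · P` over `[0, P)`, then
`∑ λᵢ ≤ m`, where `λᵢ = kᵢ + (uᵢ − γᵢ(kᵢ))/(γᵢ(kᵢ+1) − γᵢ(kᵢ))`. -/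
theorem stmt5 (n m : ℕ) (hn : 1 ≤ n) (hm : 1 ≤ m)
    (γ : Fin n → ℕ → ℝ)
    (h0 : ∀ i, γ i 0 = 0)
    (hmono : ∀ i, ∀ j : ℕ, j < m → γ i j < γ i (j + 1))
    (hratio : ∀ i, ∀ j j' : ℕ, 1 ≤ j → j < j' → j' ≤ m →
      γ i j' / γ i j < (j' : ℝ) / (j : ℝ))
    (hconv : ∀ i, ∀ j j' : ℕ, 1 ≤ j → j < j' → j' < m →
      γ i (j' + 1) - γ i j' ≤ γ i (j + 1) - γ i j)
    (u : Fin n → ℝ) (hu : ∀ i, 0 < u i) (hum : ∀ i, u i ≤ γ i m)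
    (k : Fin n → ℕ)
    (hk : ∀ i, k i = if u i ≤ γ i 1 then 0
      else Nat.findGreatest (fun j => γ i j < u i) m)
    (lam : Fin n → ℝ)
    (hlam : ∀ i, lam i =
      (k i : ℝ) + (u i - γ i (k i)) / (γ i (k i + 1) - γ i (k i)))
    (P : ℝ) (hP : 0 < P)
    (σ : ℝ → Fin m → Option (Fin n)) (hσ : Measurable σ)
    (hfeas : ∀ i, u i * P ≤ ∫ s in Set.Ico (0 : ℝ) P,
      γ i ((Finset.univ.filter (fun p => σ s p = some i)).card)) :
    ∑ i, lam i ≤ (m : ℝ) := by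
  have hγ (i : Fin n) : IsWorkLimitedProfile m (γ i) := ⟨h0 i, hmono i, hratio i, hconv i⟩
  have hkm (i : Fin n) : k i < m := hk i ▸ ite_findGreatest_lt hm (hum i)
  have := isProbabilityMeasure_cond_Ico_zero hP
  have hwork (i : Fin n) :
      u i ≤ ∫ s, γ i (processorCount (σ s) i) ∂ProbabilityTheory.cond volume (Set.Ico 0 P) := by
    rw [integral_cond_Ico_zero hP.le, le_div_iff₀ hP]
    exact hfeas i
  simpa only [Fintype.card_fin, chordInverse, hlam] using stmt5_general
    (by simpa using fun i ↦ (hγ i).antitoneOn_increment) (by simpa using hkm)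
    (fun i ↦ hmono i _ (hkm i)) (measurableSet_setOf_eq_some hσ) hwork
end

section
/- (Exact feasibility utilization bound.) Consider n sporadic implicit-deadline tasks on m identical processors; task i has an integer period T_i ≥ 1, a worst-case execution time C_i > 0, utilization u_i = C_i/T_i with u_i ≤ γ_i(m), where γ_i is a work-limited parallelism profile on m processors. For task i let k_i = 0 if u_i ≤ γ_i(1) and otherwise k_i = max{1 ≤ j ≤ m : γ_i(j) < u_i}, and let λ_i = k_i + (u_i − γ_i(k_i))/(γ_i(k_i+1) − γ_i(k_i)). Then the following are equivalent: (a) there exists a 1-periodic measurable schedule σ : ℝ → (Fin m → Option (Fin n)) such that for every task i and every real t, the integral over [t, t + T_i) of s ↦ γ_i(c_i(s)) is at least C_i, where c_i(s) is the number of processors assigned to i at time s; (b) λ_1 + λ_2 + ⋯ + λ_n ≤ m. -/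
open MeasureTheory

/-!
Concavity puts a profile `γ` below the line through any two consecutive points `(k, γ k)` and
`(k + 1, γ (k + 1))`. Choosing `k` so that this line takes the value `u` at `λ ∈ [k, k + 1]`, a task
served at average rate at least `u` occupies on average at least `λ` processors (Jensen), so the
`λᵢ` sum to at most `m`. Conversely, lay intervals of lengths `λᵢ` end to end in `[0, m)` and cut
`[0, m)` into `m` unit slices, one for each processor (McNaughton's wrap-around rule). At every time
task `i` then runs on `kᵢ` or `kᵢ + 1` processors, where the line coincides with the profile, and
on `λᵢ` processors on average.
-/

section Chord

/-- The line through the points `(k, g k)` and `(k + 1, g (k + 1))` of the graph of `g`, as a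
function of a real variable. It bounds a concave `g` from above and, on `[k, k + 1]`, interpolates
it. -/
def chord (g : ℕ → ℝ) (k : ℕ) (x : ℝ) : ℝ :=
  g k + (g (k + 1) - g k) * (x - k)

variable {g : ℕ → ℝ} {k : ℕ}

theorem chord_self (g : ℕ → ℝ) (k : ℕ) : chord g k k = g k := by
  simp [chord]

theorem chord_add_one (g : ℕ → ℝ) (k : ℕ) : chord g k (k + 1) = g (k + 1) := by
  simp [chord]

theorem chord_strictMono (hg : g k < g (k + 1)) : StrictMono (chord g k) := fun _ _ hxy ↦
  add_lt_add_right (mul_lt_mul_of_pos_left (sub_lt_sub_right hxy _) (sub_pos.2 hg)) _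

theorem chord_add_div (hg : g k < g (k + 1)) (u : ℝ) :
    chord g k (k + (u - g k) / (g (k + 1) - g k)) = u := by
  rw [chord, add_sub_cancel_left, mul_div_cancel₀ _ (sub_pos.2 hg).ne', add_sub_cancel]

theorem le_chord_of_antitoneOn_sub {m c : ℕ}
    (hg : AntitoneOn (fun j ↦ g (j + 1) - g j) (Set.Iio m)) (hk : k < m) (hc : c ≤ m) :
    g c ≤ chord g k c := by
  rcases le_total k c with hkc | hck
  · induction c, hkc using Nat.le_induction with
    | base => rw [chord_self]
    | succ c hkc ih =>
      have increment_le : g (c + 1) - g c ≤ g (k + 1) - g k := hg hk hc hkc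
      have := ih (Nat.le_of_succ_le hc)
      simp only [chord] at this ⊢
      push_cast
      linarith
  · induction hck using Nat.decreasingInduction with
    | self => rw [chord_self]
    | of_succ c hck ih =>
      have le_increment : g (k + 1) - g k ≤ g (c + 1) - g c := hg (hck.trans hk) hk hck.le
      have := ih (hck.trans hk)
      simp only [chord] at this ⊢
      push_cast at this
      linarith

variable {Ω : Type*} [MeasurableSpace Ω] {μ : Measure Ω} {c : Ω → ℕ} {m : ℕ}

theorem integrable_comp_of_forall_le [IsFiniteMeasure μ] (hc : Measurable c)
    (hcm : ∀ ω, c ω ≤ m) (g : ℕ → ℝ) :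
    Integrable (fun ω ↦ g (c ω)) μ := by
  refine .of_bound ((measurable_from_top (f := g)).comp hc).aestronglyMeasurable
    (∑ j ∈ Finset.range (m + 1), ‖g j‖) (.of_forall fun ω ↦ ?_)
  exact Finset.single_le_sum (f := fun j ↦ ‖g j‖) (fun j _ ↦ norm_nonneg _)
    (Finset.mem_range_succ_iff.2 (hcm ω))

variable [IsProbabilityMeasure μ]

theorem integral_chord (g : ℕ → ℝ) (k : ℕ) {X : Ω → ℝ} (hX : Integrable X μ) :
    ∫ ω, chord g k (X ω) ∂μ = chord g k (∫ ω, X ω ∂μ) := by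
  have hXk : Integrable (fun ω ↦ X ω - k) μ := hX.sub (integrable_const _)
  simp only [chord]
  rw [integral_add (integrable_const _) (hXk.const_mul _), integral_const_mul,
    integral_sub hX (integrable_const _)]
  simp only [integral_const, probReal_univ, one_smul]

theorem integral_comp_le_chord_integral
    (hg : AntitoneOn (fun j ↦ g (j + 1) - g j) (Set.Iio m)) (hk : k < m)
    (hc : Measurable c) (hcm : ∀ ω, c ω ≤ m) :
    ∫ ω, g (c ω) ∂μ ≤ chord g k (∫ ω, (c ω : ℝ) ∂μ) := by
  rw [← integral_chord g k (integrable_comp_of_forall_le hc hcm _)]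
  exact integral_mono (integrable_comp_of_forall_le hc hcm g)
    (integrable_comp_of_forall_le hc hcm fun j ↦ chord g k j)
    fun ω ↦ le_chord_of_antitoneOn_sub hg hk (hcm ω)

theorem integral_comp_eq_chord_integral (g : ℕ → ℝ) (hc : Measurable c)
    (hck : ∀ ω, c ω = k ∨ c ω = k + 1) :
    ∫ ω, g (c ω) ∂μ = chord g k (∫ ω, (c ω : ℝ) ∂μ) := by
  have hcm : ∀ ω, c ω ≤ k + 1 := fun ω ↦ by have := hck ω; lia
  rw [← integral_chord g k (integrable_comp_of_forall_le hc hcm _)]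
  congr with ω
  rcases hck ω with h | h
  · rw [h, chord_self]
  · rw [h, Nat.cast_add_one, chord_add_one]

end Chord

section Demand

/-- The number `k` of processors that a task with profile `g` and utilization `u` keeps busy
throughout: `0` if one processor suffices, otherwise the largest `j ≤ m` with `g j < u`. -/
noncomputable def saturatedCount (m : ℕ) (g : ℕ → ℝ) (u : ℝ) : ℕ :=
  if u ≤ g 1 then 0 else Nat.findGreatest (fun j ↦ g j < u) m

/-- The average number `λ` of processors that a task with profile `g` needs in order to run at rate
`u`, obtained by inverting the piecewise linear interpolation of `g` at `u`. -/
noncomputable def processorDemand (m : ℕ) (g : ℕ → ℝ) (u : ℝ) : ℝ :=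
  saturatedCount m g u + (u - g (saturatedCount m g u)) /
    (g (saturatedCount m g u + 1) - g (saturatedCount m g u))

variable {m : ℕ} {g : ℕ → ℝ} {u : ℝ}

theorem saturatedCount_lt (hm : 1 ≤ m) (hu : u ≤ g m) : saturatedCount m g u < m := by
  unfold saturatedCount
  split_ifs with h1
  · exact hm
  · have lt_utilization : g (Nat.findGreatest (fun j ↦ g j < u) m) < u :=
      Nat.findGreatest_spec (P := fun j ↦ g j < u) hm (not_le.1 h1)
    refine (Nat.findGreatest_le m).lt_of_ne fun h ↦ ?_
    exact (h ▸ lt_utilization).not_ge hu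

theorem apply_saturatedCount_le (hm : 1 ≤ m) (hu : g 0 ≤ u) : g (saturatedCount m g u) ≤ u := by
  unfold saturatedCount
  split_ifs with h1
  · exact hu
  · exact (Nat.findGreatest_spec (P := fun j ↦ g j < u) hm (not_le.1 h1)).le

theorem le_apply_saturatedCount_add_one (hm : 1 ≤ m) (hu : u ≤ g m) :
    u ≤ g (saturatedCount m g u + 1) := by
  have hlt := saturatedCount_lt hm hu
  unfold saturatedCount at hlt ⊢
  split_ifs at hlt ⊢ with h1
  · exact h1
  · exact not_lt.1 (Nat.findGreatest_is_greatest (P := fun j ↦ g j < u) (Nat.lt_succ_self _) hlt)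

theorem chord_processorDemand (hg : g (saturatedCount m g u) < g (saturatedCount m g u + 1)) :
    chord g (saturatedCount m g u) (processorDemand m g u) = u :=
  chord_add_div hg u

theorem processorDemand_mem_Icc (hm : 1 ≤ m) (hu : u ∈ Set.Icc (g 0) (g m))
    (hg : g (saturatedCount m g u) < g (saturatedCount m g u + 1)) :
    processorDemand m g u ∈ Set.Icc (saturatedCount m g u : ℝ) (saturatedCount m g u + 1) := by
  constructor <;> rw [← (chord_strictMono hg).le_iff_le, chord_processorDemand hg]
  · rw [chord_self]
    exact apply_saturatedCount_le hm hu.1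
  · rw [chord_add_one]
    exact le_apply_saturatedCount_add_one hm hu.2

end Demand

section ProcCount

variable {P ι : Type*} [Fintype P] [DecidableEq ι]

/-- The number of processors that the assignment `a` gives to task `i`; an idle processor is
assigned `none`. -/
def procCount (a : P → Option ι) (i : ι) : ℕ :=
  (Finset.univ.filter fun p ↦ a p = some i).card

theorem procCount_le_card (a : P → Option ι) (i : ι) : procCount a i ≤ Fintype.card P :=
  Finset.card_le_univ _

theorem sum_procCount_le_card [Fintype ι] (a : P → Option ι) :
    ∑ i, procCount a i ≤ Fintype.card P := by
  have card_eq := Finset.card_eq_sum_card_fiberwise (f := a) (s := Finset.univ)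
    (t := Finset.univ) (fun _ _ ↦ Finset.mem_coe.2 (Finset.mem_univ _))
  rw [Fintype.sum_option, Finset.card_univ] at card_eq
  simp only [procCount]
  lia

variable [MeasurableSpace ι] {Ω : Type*} [MeasurableSpace Ω] {σ : Ω → P → Option ι}

theorem measurable_procCount (hσ : Measurable σ) (i : ι) :
    Measurable fun ω ↦ procCount (σ ω) i := by
  simp only [procCount, Finset.card_filter]
  refine Finset.measurable_sum _ fun p _ ↦ .ite ?_ measurable_const measurable_const
  exact measurable_pi_iff.1 hσ p (t := {some i}) trivial

variable {μ : Measure Ω}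

theorem integrable_comp_procCount [IsFiniteMeasure μ] (hσ : Measurable σ) (i : ι) (g : ℕ → ℝ) :
    Integrable (fun ω ↦ g (procCount (σ ω) i)) μ :=
  integrable_comp_of_forall_le (measurable_procCount hσ i)
    (fun ω ↦ procCount_le_card (σ ω) i) g

variable [IsProbabilityMeasure μ]

theorem sum_integral_procCount_le_card [Fintype ι] (hσ : Measurable σ) :
    ∑ i, ∫ ω, (procCount (σ ω) i : ℝ) ∂μ ≤ Fintype.card P := by
  have integrable_count (i : ι) : Integrable (fun ω ↦ (procCount (σ ω) i : ℝ)) μ :=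
    integrable_comp_procCount hσ i _
  calc ∑ i, ∫ ω, (procCount (σ ω) i : ℝ) ∂μ
      = ∫ ω, ∑ i, (procCount (σ ω) i : ℝ) ∂μ :=
        (integral_finsetSum _ fun i _ ↦ integrable_count i).symm
    _ ≤ ∫ _, (Fintype.card P : ℝ) ∂μ :=
        integral_mono (integrable_finsetSum _ fun i _ ↦ integrable_count i) (integrable_const _)
          fun ω ↦ by exact_mod_cast sum_procCount_le_card (σ ω)
    _ = Fintype.card P := by simp

theorem processorDemand_le_integral_procCount {m : ℕ} {g : ℕ → ℝ} {u : ℝ} {i : ι}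
    (hσ : Measurable σ) (hP : Fintype.card P ≤ m) (hm : 1 ≤ m)
    (hmono : ∀ j < m, g j < g (j + 1))
    (hconc : AntitoneOn (fun j ↦ g (j + 1) - g j) (Set.Iio m))
    (hu : u ≤ g m) (hrate : u ≤ ∫ ω, g (procCount (σ ω) i) ∂μ) :
    processorDemand m g u ≤ ∫ ω, (procCount (σ ω) i : ℝ) ∂μ := by
  have hk := saturatedCount_lt hm hu
  rw [← (chord_strictMono (hmono _ hk)).le_iff_le, chord_processorDemand (hmono _ hk)]
  exact hrate.trans <| integral_comp_le_chord_integral hconc hk (measurable_procCount hσ i)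
    fun ω ↦ (procCount_le_card (σ ω) i).trans hP

end ProcCount

instance isProbabilityMeasure_volume_restrict_Ico_zero_one :
    IsProbabilityMeasure ((volume : Measure ℝ).restrict (Set.Ico 0 1)) :=
  ⟨by simp⟩

section Slices

theorem ceil_sub_ceil_eq_or_eq_add_one {k : ℕ} {y z : ℝ} (hy : -1 < y)
    (hyz : z - y ∈ Set.Icc (k : ℝ) (k + 1)) :
    ⌈z⌉₊ - ⌈y⌉₊ = k ∨ ⌈z⌉₊ - ⌈y⌉₊ = k + 1 := by
  have hy_ceil := Nat.ceil_lt_add_one_of_gt_neg_one hy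
  have hz_ceil := Nat.ceil_lt_add_one_of_gt_neg_one (a := z)
    (by linarith [hyz.1, k.cast_nonneg (α := ℝ)])
  have upper : ⌈z⌉₊ < ⌈y⌉₊ + k + 2 := by
    rify
    linarith [Nat.le_ceil y, hyz.2]
  have lower : ⌈y⌉₊ + k < ⌈z⌉₊ + 1 := by
    rify
    linarith [Nat.le_ceil z, hyz.1]
  lia

variable {m : ℕ} {a b x : ℝ}

theorem card_filter_add_mem_Ico (hx : 0 ≤ x) (hb : b ≤ m) :
    (Finset.univ.filter fun p : Fin m ↦ a ≤ p + x ∧ p + x < b).card = ⌈b - x⌉₊ - ⌈a - x⌉₊ := by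
  rw [← Nat.card_Ico, ← Finset.card_map Fin.valEmbedding]
  congr 1
  ext q
  simp only [Finset.mem_map, Finset.mem_filter_univ, Fin.valEmbedding_apply, Finset.mem_Ico,
    Nat.ceil_le, Nat.lt_ceil, sub_le_iff_le_add, lt_sub_iff_add_lt]
  constructor
  · rintro ⟨p, hp, rfl⟩
    exact hp
  · intro hq
    have hqm : (q : ℝ) < m := by linarith
    exact ⟨⟨q, by exact_mod_cast hqm⟩, hq, rfl⟩

theorem integral_card_filter_add_mem {A : Set ℝ} [DecidablePred (· ∈ A)] (hA : MeasurableSet A)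
    (hAm : A ⊆ Set.Ico 0 (m : ℝ)) :
    ∫ x in Set.Ico (0 : ℝ) 1, ((Finset.univ.filter fun p : Fin m ↦ (p : ℝ) + x ∈ A).card : ℝ) =
      volume.real A := by
  set f : ℝ → ℝ := A.indicator 1 with hf
  have hfi (a b : ℝ) : IntervalIntegrable f volume a b := by
    rw [intervalIntegrable_iff]
    exact (integrableOn_const (C := (1 : ℝ)) (by simp)).indicator hA
  have card_eq (x : ℝ) : ((Finset.univ.filter fun p : Fin m ↦ (p : ℝ) + x ∈ A).card : ℝ) =
      ∑ p ∈ Finset.range m, f (p + x) := by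
    simp only [Finset.card_filter, Finset.sum_range, hf, Set.indicator_apply, Pi.one_apply,
      Nat.cast_sum, Nat.cast_ite, Nat.cast_one, Nat.cast_zero]
  calc ∫ x in Set.Ico (0 : ℝ) 1, ((Finset.univ.filter fun p : Fin m ↦ (p : ℝ) + x ∈ A).card : ℝ)
      = ∫ x in (0 : ℝ)..1, ∑ p ∈ Finset.range m, f (p + x) := by
        rw [integral_Ico_eq_integral_Ioc, intervalIntegral.integral_of_le zero_le_one]
        simp only [card_eq]
    _ = ∑ p ∈ Finset.range m, ∫ x in (0 : ℝ)..1, f (p + x) :=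
        intervalIntegral.integral_finsetSum fun p _ ↦ by
          simpa using (hfi (p + 0) (p + 1)).comp_add_left (p : ℝ)
    _ = ∑ p ∈ Finset.range m, ∫ x in (p : ℝ)..(p + 1 : ℕ), f x := by
        simp only [intervalIntegral.integral_comp_add_left, add_zero, Nat.cast_add_one]
    _ = ∫ x in ((0 : ℕ) : ℝ)..m, f x :=
        intervalIntegral.sum_integral_adjacent_intervals fun p _ ↦ hfi _ _
    _ = volume.real A := by
        rw [Nat.cast_zero, intervalIntegral.integral_of_le m.cast_nonneg,
          ← integral_Ico_eq_integral_Ioc, setIntegral_indicator hA, Set.inter_eq_right.2 hAm]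
        simp

end Slices

section WrapAround

variable {α ι : Type*}

open scoped Classical in
/-- The index of a member of the family `A` that contains `x`, or `none` if there is no such member.
The choice is only canonical for pairwise disjoint families. -/
noncomputable def blockIndex (A : ι → Set α) (x : α) : Option ι :=
  if h : ∃ i, x ∈ A i then some h.choose else none

theorem blockIndex_eq_some_iff {A : ι → Set α} (hA : Pairwise (Function.onFun Disjoint A)) {x : α}
    {i : ι} : blockIndex A x = some i ↔ x ∈ A i := by
  unfold blockIndex
  split_ifs with h
  · rw [Option.some_inj]
    refine ⟨fun hi ↦ hi ▸ h.choose_spec, fun hi ↦ ?_⟩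
    by_contra hne
    exact Set.disjoint_left.1 (hA hne) h.choose_spec hi
  · simpa only [reduceCtorEq, false_iff] using fun hi ↦ h ⟨i, hi⟩

theorem measurable_option_of_measurableSet_fiber [Countable ι] [MeasurableSpace ι]
    [MeasurableSpace α] {f : α → Option ι} (hf : ∀ i, MeasurableSet (f ⁻¹' {some i})) :
    Measurable f := by
  refine measurable_to_countable' fun o ↦ ?_
  cases o with
  | some i => exact hf i
  | none =>
    have fiber_none : f ⁻¹' {none} = (⋃ i, f ⁻¹' {some i})ᶜ := by
      ext x
      simp [← Option.eq_none_iff_forall_ne_some]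
    rw [fiber_none]
    exact (MeasurableSet.iUnion hf).compl

theorem measurable_blockIndex [Countable ι] [MeasurableSpace ι] [MeasurableSpace α]
    {A : ι → Set α} (hA : Pairwise (Function.onFun Disjoint A)) (hAm : ∀ i, MeasurableSet (A i)) :
    Measurable (blockIndex A) := by
  refine measurable_option_of_measurableSet_fiber fun i ↦ ?_
  convert hAm i
  ext x
  exact blockIndex_eq_some_iff hA

/-- McNaughton's wrap-around schedule for the blocks `A i ⊆ [0, m)`: processor `p` runs through
the slice `[p, p + 1)` during each unit of time. -/
noncomputable def wrapSchedule (m : ℕ) (A : ι → Set ℝ) (s : ℝ) (p : Fin m) : Option ι :=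
  blockIndex A (p + Int.fract s)

variable {m : ℕ} {A : ι → Set ℝ}

theorem wrapSchedule_add_one (m : ℕ) (A : ι → Set ℝ) (s : ℝ) :
    wrapSchedule m A (s + 1) = wrapSchedule m A s := by
  funext p
  rw [wrapSchedule, wrapSchedule, Int.fract_add_one]

theorem measurable_wrapSchedule [Countable ι] [MeasurableSpace ι]
    (hA : Pairwise (Function.onFun Disjoint A)) (hAm : ∀ i, MeasurableSet (A i)) :
    Measurable (wrapSchedule m A) :=
  measurable_pi_iff.2 fun _ ↦
    (measurable_blockIndex hA hAm).comp (measurable_const.add measurable_fract)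

variable [DecidableEq ι]

open scoped Classical in
theorem procCount_wrapSchedule (hA : Pairwise (Function.onFun Disjoint A)) (s : ℝ) (i : ι) :
    procCount (wrapSchedule m A s) i =
      (Finset.univ.filter fun p : Fin m ↦ (p : ℝ) + Int.fract s ∈ A i).card := by
  simp only [procCount, wrapSchedule, blockIndex_eq_some_iff hA]

theorem procCount_wrapSchedule_eq_or_eq_add_one (hA : Pairwise (Function.onFun Disjoint A))
    {i : ι} {a b : ℝ} (hi : A i = Set.Ico a b) (ha : 0 ≤ a) (hb : b ≤ m) {k : ℕ}
    (hk : b - a ∈ Set.Icc (k : ℝ) (k + 1)) (s : ℝ) :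
    procCount (wrapSchedule m A s) i = k ∨ procCount (wrapSchedule m A s) i = k + 1 := by
  simp only [procCount_wrapSchedule hA, hi, Set.mem_Ico]
  convert ceil_sub_ceil_eq_or_eq_add_one (k := k) (y := a - Int.fract s) (z := b - Int.fract s)
    (by linarith [Int.fract_lt_one s]) (by rwa [sub_sub_sub_cancel_right]) using 2 <;>
  convert card_filter_add_mem_Ico (Int.fract_nonneg s) hb

theorem integral_procCount_wrapSchedule (hA : Pairwise (Function.onFun Disjoint A)) {i : ι}
    (hi : MeasurableSet (A i)) (him : A i ⊆ Set.Ico 0 (m : ℝ)) :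
    ∫ s in Set.Ico (0 : ℝ) 1, (procCount (wrapSchedule m A s) i : ℝ) = volume.real (A i) := by
  classical
  rw [← integral_card_filter_add_mem hi him]
  refine setIntegral_congr_fun measurableSet_Ico fun s hs ↦ ?_
  simp only [procCount_wrapSchedule hA, Int.fract_eq_self.2 hs]

end WrapAround

section ConsecutiveBlocks

variable {ι : Type*} [LinearOrder ι] [LocallyFiniteOrderBot ι]

/-- Intervals of lengths `lam i`, laid end to end from `0` in the order of the indices. -/
def consecutiveBlock (lam : ι → ℝ) (i : ι) : Set ℝ :=
  Set.Ico (∑ j ∈ Finset.Iio i, lam j) (∑ j ∈ Finset.Iic i, lam j)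

theorem sum_Iic_sub_sum_Iio (lam : ι → ℝ) (i : ι) :
    ∑ j ∈ Finset.Iic i, lam j - ∑ j ∈ Finset.Iio i, lam j = lam i := by
  rw [← Finset.Iio_insert, Finset.sum_insert Finset.notMem_Iio_self, add_sub_cancel_right]

variable {lam : ι → ℝ}

theorem pairwise_disjoint_consecutiveBlock (hlam : ∀ i, 0 ≤ lam i) :
    Pairwise (Function.onFun Disjoint (consecutiveBlock lam)) := by
  refine (pairwise_disjoint_on _).2 fun i j hij ↦ Set.disjoint_left.2 fun x hxi hxj ↦ ?_
  have end_le_start : ∑ l ∈ Finset.Iic i, lam l ≤ ∑ l ∈ Finset.Iio j, lam l :=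
    Finset.sum_le_sum_of_subset_of_nonneg
      (fun l hl ↦ Finset.mem_Iio.2 ((Finset.mem_Iic.1 hl).trans_lt hij)) fun l _ _ ↦ hlam l
  exact (hxi.2.trans_le end_le_start).not_ge hxj.1

theorem volume_real_consecutiveBlock {i : ι} (hi : 0 ≤ lam i) :
    volume.real (consecutiveBlock lam i) = lam i := by
  rw [consecutiveBlock, Real.volume_real_Ico, sum_Iic_sub_sum_Iio, max_eq_left hi]

variable [Fintype ι] [MeasurableSpace ι]

theorem exists_schedule_of_sum_le {m : ℕ} {k : ι → ℕ}
    (hlam : ∀ i, lam i ∈ Set.Icc (k i : ℝ) (k i + 1)) (hsum : ∑ i, lam i ≤ m) :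
    ∃ σ : ℝ → Fin m → Option ι, Measurable σ ∧ (∀ s, σ (s + 1) = σ s) ∧
      (∀ i s, procCount (σ s) i = k i ∨ procCount (σ s) i = k i + 1) ∧
      ∀ i, ∫ s in Set.Ico (0 : ℝ) 1, (procCount (σ s) i : ℝ) = lam i := by
  have hlam0 (i : ι) : 0 ≤ lam i := (Nat.cast_nonneg _).trans (hlam i).1
  have start_nonneg (i : ι) : 0 ≤ ∑ j ∈ Finset.Iio i, lam j := Finset.sum_nonneg fun j _ ↦ hlam0 j
  have end_le (i : ι) : ∑ j ∈ Finset.Iic i, lam j ≤ m :=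
    (Finset.sum_le_univ_sum_of_nonneg hlam0).trans hsum
  have hdisj := pairwise_disjoint_consecutiveBlock hlam0
  refine ⟨wrapSchedule m (consecutiveBlock lam),
    measurable_wrapSchedule hdisj fun i ↦ measurableSet_Ico, wrapSchedule_add_one m _,
    fun i s ↦ ?_, fun i ↦ ?_⟩
  · refine procCount_wrapSchedule_eq_or_eq_add_one hdisj rfl (start_nonneg i) (end_le i) ?_ s
    rw [sum_Iic_sub_sum_Iio]
    exact hlam i
  · rw [integral_procCount_wrapSchedule hdisj measurableSet_Ico
      (Set.Ico_subset_Ico (start_nonneg i) (end_le i)), volume_real_consecutiveBlock (hlam0 i)]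

theorem exists_schedule_of_sum_processorDemand_le {m : ℕ} {γ : ι → ℕ → ℝ} {u : ι → ℝ}
    (hm : 1 ≤ m) (hmono : ∀ i, ∀ j < m, γ i j < γ i (j + 1))
    (hu : ∀ i, u i ∈ Set.Icc (γ i 0) (γ i m))
    (hsum : ∑ i, processorDemand m (γ i) (u i) ≤ m) :
    ∃ σ : ℝ → Fin m → Option ι, Measurable σ ∧ (∀ s, σ (s + 1) = σ s) ∧
      ∀ i, ∫ s in Set.Ico (0 : ℝ) 1, γ i (procCount (σ s) i) = u i := by
  have hstep (i : ι) := hmono i _ (saturatedCount_lt hm (hu i).2)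
  obtain ⟨σ, hσ, hper, hcount, hmean⟩ :=
    exists_schedule_of_sum_le (fun i ↦ processorDemand_mem_Icc hm (hu i) (hstep i)) hsum
  refine ⟨σ, hσ, hper, fun i ↦ ?_⟩
  rw [integral_comp_eq_chord_integral (γ i) (measurable_procCount hσ i) (hcount i), hmean i,
    chord_processorDemand (hstep i)]

end ConsecutiveBlocks

section Periodic

theorem setIntegral_Ico_add_nsmul_of_periodic {E : Type*} [NormedAddCommGroup E] [NormedSpace ℝ E]
    {f : ℝ → E} {c : ℝ} (hf : Function.Periodic f c) (hc : 0 < c)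
    (hfi : IntegrableOn f (Set.Ico 0 c)) (t : ℝ) (N : ℕ) :
    ∫ s in Set.Ico t (t + N • c), f s = N • ∫ s in Set.Ico 0 c, f s := by
  have hint : IntervalIntegrable f volume 0 c :=
    (intervalIntegrable_iff_integrableOn_Ico_of_le hc.le).2 hfi
  have window := hf.intervalIntegral_add_zsmul_eq N t (hf.intervalIntegrable₀ hc.ne' hint)
  rw [hf.intervalIntegral_add_eq t 0, zero_add, natCast_zsmul, natCast_zsmul] at window
  rwa [integral_Ico_eq_integral_Ioc, integral_Ico_eq_integral_Ioc,
    ← intervalIntegral.integral_of_le (le_add_of_nonneg_right (nsmul_nonneg hc.le N)),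
    ← intervalIntegral.integral_of_le hc.le]

theorem le_setIntegral_Ico_iff_div_le_of_periodic {f : ℝ → ℝ} (hf : Function.Periodic f 1)
    (hfi : IntegrableOn f (Set.Ico 0 1)) {N : ℕ} (hN : 1 ≤ N) (C t : ℝ) :
    C ≤ ∫ s in Set.Ico t (t + N), f s ↔ C / N ≤ ∫ s in Set.Ico (0 : ℝ) 1, f s := by
  have window := setIntegral_Ico_add_nsmul_of_periodic hf one_pos hfi t N
  rw [nsmul_one, nsmul_eq_mul] at window
  rw [window, div_le_iff₀' (by exact_mod_cast hN)]

end Periodic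

theorem antitoneOn_sub_of_ratio_lt {m : ℕ} {g : ℕ → ℝ} (h0 : g 0 = 0) (h01 : g 0 < g 1)
    (hratio : 1 < m → g 2 / g 1 < 2)
    (hconv : ∀ j j' : ℕ, 1 ≤ j → j < j' → j' < m → g (j' + 1) - g j' ≤ g (j + 1) - g j) :
    AntitoneOn (fun j ↦ g (j + 1) - g j) (Set.Iio m) := by
  have first_increments (hm : 1 < m) : g 2 - g 1 ≤ g 1 - g 0 := by
    linarith [(div_lt_iff₀ (h0 ▸ h01)).1 (hratio hm)]
  intro j _ j' (hj' : j' < m) hjj'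
  rcases hjj'.eq_or_lt with rfl | hlt
  · rfl
  rcases j.eq_zero_or_pos with rfl | hj
  · rcases (Nat.one_le_iff_ne_zero.2 hlt.ne').eq_or_lt with rfl | h1
    · exact first_increments hj'
    · exact (hconv 1 j' le_rfl h1 hj').trans (first_increments (h1.trans hj'))
  · exact hconv j j' hj hlt hj'

theorem stmt7_general {ι : Type*} [Fintype ι] [LinearOrder ι] [LocallyFiniteOrderBot ι]
    [MeasurableSpace ι] {m : ℕ} (hm : 1 ≤ m) {γ : ι → ℕ → ℝ}
    (hmono : ∀ i, ∀ j < m, γ i j < γ i (j + 1))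
    (hconc : ∀ i, AntitoneOn (fun j ↦ γ i (j + 1) - γ i j) (Set.Iio m))
    {T : ι → ℕ} (hT : ∀ i, 1 ≤ T i) {C : ι → ℝ}
    (hu : ∀ i, C i / T i ∈ Set.Icc (γ i 0) (γ i m)) :
    (∃ σ : ℝ → Fin m → Option ι, Measurable σ ∧ (∀ s, σ (s + 1) = σ s) ∧
      ∀ i t, C i ≤ ∫ s in Set.Ico t (t + (T i : ℝ)), γ i (procCount (σ s) i)) ↔
    ∑ i, processorDemand m (γ i) (C i / T i) ≤ m := by
  have work_iff {σ : ℝ → Fin m → Option ι} (hσ : Measurable σ) (hper : ∀ s, σ (s + 1) = σ s)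
      (i : ι) (t : ℝ) : C i ≤ ∫ s in Set.Ico t (t + (T i : ℝ)), γ i (procCount (σ s) i) ↔
        C i / T i ≤ ∫ s in Set.Ico (0 : ℝ) 1, γ i (procCount (σ s) i) :=
    le_setIntegral_Ico_iff_div_le_of_periodic (fun s ↦ by rw [hper])
      (integrable_comp_procCount hσ i (γ i)) (hT i) (C i) t
  constructor
  · rintro ⟨σ, hσ, hper, hwork⟩
    have demand_le (i : ι) : processorDemand m (γ i) (C i / T i) ≤
        ∫ s in Set.Ico (0 : ℝ) 1, (procCount (σ s) i : ℝ) :=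
      processorDemand_le_integral_procCount hσ (Fintype.card_fin m).le hm (hmono i) (hconc i)
        (hu i).2 ((work_iff hσ hper i 0).1 (hwork i 0))
    calc ∑ i, processorDemand m (γ i) (C i / T i)
        ≤ ∑ i, ∫ s in Set.Ico (0 : ℝ) 1, (procCount (σ s) i : ℝ) :=
          Finset.sum_le_sum fun i _ ↦ demand_le i
      _ ≤ Fintype.card (Fin m) := sum_integral_procCount_le_card hσ
      _ = m := by rw [Fintype.card_fin]
  · intro hsum
    obtain ⟨σ, hσ, hper, hrate⟩ := exists_schedule_of_sum_processorDemand_le hm hmono hu hsum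
    exact ⟨σ, hσ, hper, fun i t ↦ (work_iff hσ hper i t).2 (hrate i).ge⟩

/-- Exact feasibility utilization bound: for sporadic
implicit-deadline tasks with work-limited parallelism profiles, a 1-periodic
measurable schedule giving each task `i` at least `Cᵢ` units of execution in
every window `[t, t + Tᵢ)` exists if and only if `∑ λᵢ ≤ m`. -/
theorem stmt7 (n m : ℕ) (hn : 1 ≤ n) (hm : 1 ≤ m)
    (γ : Fin n → ℕ → ℝ)
    (h0 : ∀ i, γ i 0 = 0)
    (hmono : ∀ i, ∀ j : ℕ, j < m → γ i j < γ i (j + 1))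
    (hratio : ∀ i, ∀ j j' : ℕ, 1 ≤ j → j < j' → j' ≤ m →
      γ i j' / γ i j < (j' : ℝ) / (j : ℝ))
    (hconv : ∀ i, ∀ j j' : ℕ, 1 ≤ j → j < j' → j' < m →
      γ i (j' + 1) - γ i j' ≤ γ i (j + 1) - γ i j)
    (T : Fin n → ℕ) (hT : ∀ i, 1 ≤ T i)
    (C : Fin n → ℝ) (hC : ∀ i, 0 < C i)
    (u : Fin n → ℝ) (hu : ∀ i, u i = C i / (T i : ℝ))
    (hum : ∀ i, u i ≤ γ i m)
    (k : Fin n → ℕ)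
    (hk : ∀ i, k i = if u i ≤ γ i 1 then 0
      else Nat.findGreatest (fun j => γ i j < u i) m)
    (lam : Fin n → ℝ)
    (hlam : ∀ i, lam i =
      (k i : ℝ) + (u i - γ i (k i)) / (γ i (k i + 1) - γ i (k i))) :
    (∃ σ : ℝ → Fin m → Option (Fin n),
      Measurable σ ∧
      (∀ s : ℝ, σ (s + 1) = σ s) ∧
      (∀ i, ∀ t : ℝ, C i ≤ ∫ s in Set.Ico t (t + (T i : ℝ)),
        γ i ((Finset.univ.filter (fun p => σ s p = some i)).card)))
    ↔ ∑ i, lam i ≤ (m : ℝ) := by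
  obtain rfl : u = fun i ↦ C i / T i := funext hu
  obtain rfl : k = fun i ↦ saturatedCount m (γ i) (C i / T i) := funext hk
  obtain rfl : lam = fun i ↦ processorDemand m (γ i) (C i / T i) := funext hlam
  exact stmt7_general hm hmono
    (fun i ↦ antitoneOn_sub_of_ratio_lt (h0 i) (hmono i 0 hm)
      (fun h ↦ by simpa using hratio i 1 2 le_rfl one_lt_two h) (hconv i))
    hT (fun i ↦ ⟨h0 i ▸ div_nonneg (hC i).le (Nat.cast_nonneg _), hum i⟩)
end

section
/- (Reduction with static processor assignment, limiting migrations.) Consider n sporadic implicit-deadline tasks on m identical processors; task i has an integer period T_i ≥ 1, a worst-case execution time C_i > 0, utilization u_i = C_i/T_i with u_i ≤ γ_i(m), where γ_i is a work-limited parallelism profile on m processors; let k_i = 0 if u_i ≤ γ_i(1) and otherwise k_i = max{1 ≤ j ≤ m : γ_i(j) < u_i}, let ℓ_i = (u_i − γ_i(k_i))/(γ_i(k_i+1) − γ_i(k_i)) and λ_i = k_i + ℓ_i. If λ_1 + ⋯ + λ_n ≤ m, then there exist pairwise disjoint subsets S_1, …, S_n of the m processors with |S_i| = k_i for each i, together with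 a 1-periodic measurable schedule σ : ℝ → (Fin m → Option (Fin n)) such that: (a) σ(s)(p) = some i for every time s and every processor p ∈ S_i (task i is statically and permanently assigned the k_i processors of S_i); (b) at every time s, at most one processor outside S_1 ∪ ⋯ ∪ S_n is assigned to task i; and (c) for every task i and every real t, the integral over [t, t + T_i) of s ↦ γ_i(c_i(s)) is at least C_i, where c_i(s) is the total number of processors assigned to i at time s. -/
open MeasureTheory

/-!
Cut task `i` into a static piece of integer length `kᵢ` and a dynamic piece of length `ℓᵢ ≤ 1`, and
lay all the pieces end to end on `[0, ∑ λᵢ) ⊆ [0, m)`, the static ones first. Folding this line into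
`m` unit segments (McNaughton's wrap-around rule) lets processor `p` at time `s` run the piece lying
over `p + fract s`. Static pieces start and end at integers, so they fill whole processors; a
dynamic piece, being no longer than `1`, meets at most one processor at a time and is run for a
fraction `ℓᵢ` of every unit of time. Task `i` thus runs at speed `γᵢ(kᵢ + 1)` for a fraction `ℓᵢ` of
the time and at speed `γᵢ(kᵢ)` otherwise, and `ℓᵢ` is chosen so that this averages to `uᵢ`.
-/

section Packing

variable {κ R : Type*} [Fintype κ] [LinearOrder κ]

/-- The left endpoint of the `i`-th interval when intervals of lengths `f j` are laid end to end
from `0`, in increasing order of `j`. -/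
def packStart [AddCommMonoid R] (f : κ → R) (i : κ) : R := ∑ j with j < i, f j

/-- The `i`-th interval when half-open intervals of lengths `f j` are laid end to end from `0`. -/
def packInterval [AddCommMonoid R] [Preorder R] (f : κ → R) (i : κ) : Set R :=
  Set.Ico (packStart f i) (packStart f i + f i)

section Ordered

variable [AddCommMonoid R] [PartialOrder R] [IsOrderedAddMonoid R] {f : κ → R}

lemma packStart_nonneg (hf : 0 ≤ f) (i : κ) : 0 ≤ packStart f i :=
  Finset.sum_nonneg fun j _ => hf j

lemma packStart_add_le_sum (hf : 0 ≤ f) (i : κ) : packStart f i + f i ≤ ∑ j, f j := by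
  rw [packStart, add_comm, ← Finset.sum_insert (by simp)]
  exact Finset.sum_le_univ_sum_of_nonneg hf

lemma packStart_add_le_packStart (hf : 0 ≤ f) {i j : κ} (hij : i < j) :
    packStart f i + f i ≤ packStart f j := by
  rw [packStart, add_comm, ← Finset.sum_insert (by simp)]
  refine Finset.sum_le_sum_of_subset_of_nonneg (fun a ha => ?_) fun a _ _ => hf a
  simp only [Finset.mem_insert, Finset.mem_filter_univ] at ha ⊢
  rcases ha with rfl | ha
  exacts [hij, ha.trans hij]

lemma pairwise_disjoint_packInterval (hf : 0 ≤ f) :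
    Pairwise (Function.onFun Disjoint (packInterval f)) := by
  refine (pairwise_disjoint_on _).2 fun i j hij => Set.disjoint_left.2 fun x hi hj => ?_
  exact ((hi.2.trans_le (packStart_add_le_packStart hf hij)).trans_le hj.1).false

end Ordered

open Classical in
/-- The index of the interval of the packing `packInterval f` that covers `x`, if there is one. -/
noncomputable def packAt (f : κ → ℝ) (x : ℝ) : Option κ :=
  if h : ∃ i, x ∈ packInterval f i then some h.choose else none

variable {f : κ → ℝ}

lemma packAt_eq_some_iff (hf : 0 ≤ f) {x : ℝ} {i : κ} :
    packAt f x = some i ↔ x ∈ packInterval f i := by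
  unfold packAt
  split_ifs with h
  · have huniq (hi : x ∈ packInterval f i) : h.choose = i :=
      (pairwise_disjoint_packInterval hf).eq (Set.not_disjoint_iff.2 ⟨x, h.choose_spec, hi⟩)
    exact Option.some_inj.trans ⟨fun hi => hi ▸ h.choose_spec, huniq⟩
  · exact ⟨nofun, fun hi => (h ⟨i, hi⟩).elim⟩

lemma measurable_packAt [MeasurableSpace (Option κ)] (hf : 0 ≤ f) : Measurable (packAt f) := by
  have hsome (i : κ) : MeasurableSet (packAt f ⁻¹' {some i}) := by
    have : packAt f ⁻¹' {some i} = packInterval f i := Set.ext fun x => packAt_eq_some_iff hf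
    exact this ▸ measurableSet_Ico
  refine measurable_to_countable' fun
    | some i => hsome i
    | none => ?_
  have : packAt f ⁻¹' {none} = (⋃ i, packAt f ⁻¹' {some i})ᶜ := by
    ext x
    cases h : packAt f x <;> simp [h]
  exact this ▸ (MeasurableSet.iUnion hsome).compl

end Packing

section WrapAround

variable {κ : Type*} [Fintype κ] [LinearOrder κ] {f : κ → ℝ} {m : ℕ}

/-- McNaughton's wrap-around schedule for jobs of lengths `f`: the jobs are packed end to end and
the line is folded into unit segments, so that the point `p + fract s` is served by processor `p`
at the times congruent to `s` modulo `1`. -/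
noncomputable def wrapAround (f : κ → ℝ) (m : ℕ) (s : ℝ) (p : Fin m) : Option κ :=
  packAt f (p + Int.fract s)

lemma wrapAround_periodic (f : κ → ℝ) (m : ℕ) : Function.Periodic (wrapAround f m) 1 :=
  fun s => funext fun p => by simp only [wrapAround, Int.fract_add_one]

lemma measurable_wrapAround [MeasurableSpace (Option κ)] (hf : 0 ≤ f) :
    Measurable (wrapAround f m) :=
  measurable_pi_iff.2 fun _ => (measurable_packAt hf).comp (measurable_fract.const_add _)

lemma wrapAround_eq_some_iff_of_natCast (hf : 0 ≤ f) {i : κ} {a k : ℕ} (ha : packStart f i = a)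
    (hk : f i = k) {s : ℝ} {p : Fin m} :
    wrapAround f m s p = some i ↔ (p : ℕ) ∈ Set.Ico a (a + k) := by
  have hnonneg : 0 ≤ (p : ℝ) + Int.fract s := add_nonneg p.val.cast_nonneg (Int.fract_nonneg s)
  have hfloor : ⌊(p : ℝ) + Int.fract s⌋₊ = p := by
    rw [add_comm, Nat.floor_add_natCast (Int.fract_nonneg s),
      Nat.floor_eq_zero.2 (Int.fract_lt_one s), zero_add]
  rw [wrapAround, packAt_eq_some_iff hf, packInterval, ha, hk, Set.mem_Ico, Set.mem_Ico,
    ← Nat.cast_add, ← Nat.le_floor_iff hnonneg, ← Nat.floor_lt hnonneg, hfloor]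

/-- `⌈a - fract s⌉` is the only integer translate bringing `fract s` into `[a, a + 1)`, and the
translate then sits at distance `fract (s - a)` from `a`. -/
lemma intCast_add_fract_mem_Ico_iff {K : Type*} [Field K] [LinearOrder K] [IsStrictOrderedRing K]
    [FloorRing K] {a l : K} (hl : l ≤ 1) {s : K} {q : ℤ} :
    q + Int.fract s ∈ Set.Ico a (a + l) ↔ q = ⌈a - Int.fract s⌉ ∧ Int.fract (s - a) < l := by
  have hfract : Int.fract (s - a) = ⌈a - Int.fract s⌉ + Int.fract s - a := by
    refine Int.fract_eq_iff.2 ⟨?_, ?_, ⌊s⌋ - ⌈a - Int.fract s⌉, ?_⟩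
    · linarith [Int.le_ceil (a - Int.fract s)]
    · linarith [Int.ceil_lt_add_one (a - Int.fract s)]
    · push_cast
      linarith [Int.floor_add_fract s]
  constructor
  · rintro ⟨hle, hlt⟩
    have hq : ⌈a - Int.fract s⌉ = q := Int.ceil_eq_iff.2 ⟨by linarith, by linarith⟩
    exact ⟨hq.symm, by rw [hfract, hq]; linarith⟩
  · rintro ⟨rfl, hlt⟩
    exact ⟨by linarith [Int.fract_nonneg (s - a)], by linarith⟩

lemma card_wrapAround_eq_of_le_one (hf : 0 ≤ f) (hsum : ∑ i, f i ≤ m) {i : κ} (hi : f i ≤ 1)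
    (s : ℝ) :
    ({p | wrapAround f m s p = some i} : Finset (Fin m)).card
      = if Int.fract (s - packStart f i) < f i then 1 else 0 := by
  have hmem (p : Fin m) : wrapAround f m s p = some i ↔
      (p : ℤ) = ⌈packStart f i - Int.fract s⌉ ∧ Int.fract (s - packStart f i) < f i := by
    rw [← intCast_add_fract_mem_Ico_iff hi, Int.cast_natCast]
    exact packAt_eq_some_iff hf
  simp only [hmem]
  split_ifs with h
  · have hnonneg : 0 ≤ ⌈packStart f i - Int.fract s⌉ := Int.ceil_nonneg_of_neg_one_lt <| by
      linarith [packStart_nonneg hf i, Int.fract_lt_one s]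
    obtain ⟨q, hq⟩ := Int.eq_ofNat_of_zero_le hnonneg
    have hqm : q < m := by
      have hlt := ((intCast_add_fract_mem_Ico_iff hi).2 ⟨rfl, h⟩).2
      rw [hq, Int.cast_natCast] at hlt
      have := packStart_add_le_sum hf i
      exact_mod_cast (by linarith [Int.fract_nonneg s] : (q : ℝ) < m)
    refine Finset.card_eq_one.2 ⟨⟨q, hqm⟩, ?_⟩
    ext p
    simp [h, hq, Fin.ext_iff]
  · simp [h]

end WrapAround

section StaticSchedule

variable {ι : Type*} {k : ι → ℕ} {ℓ : ι → ℝ} {m : ℕ}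

/-- The lengths of the static pieces `Sum.inlₗ i` and the dynamic pieces `Sum.inrₗ i`. The
lexicographic order on the sum packs all static pieces before all dynamic ones. -/
def pieceLength (k : ι → ℕ) (ℓ : ι → ℝ) (x : ι ⊕ₗ ι) : ℝ :=
  Sum.elim (fun i => (k i : ℝ)) ℓ (ofLex x)

lemma pieceLength_nonneg (hℓ : 0 ≤ ℓ) : 0 ≤ pieceLength k ℓ := fun
  | .inl i => (k i).cast_nonneg
  | .inr i => hℓ i

lemma sum_pieceLength [Fintype ι] : ∑ x, pieceLength k ℓ x = ∑ i, (k i + ℓ i) := by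
  rw [← Equiv.sum_comp toLex, Fintype.sum_sum_type, Finset.sum_add_distrib]
  rfl

lemma sum_le_of_sum_add_le [Fintype ι] (hℓ : 0 ≤ ℓ) (hsum : ∑ i, (k i + ℓ i) ≤ m) :
    ∑ i, k i ≤ m := by
  have hle : ∑ i, (k i : ℝ) ≤ m :=
    (Finset.sum_le_sum fun i _ => le_add_of_nonneg_right (hℓ i)).trans hsum
  exact_mod_cast hle

variable [Fintype ι] [LinearOrder ι]

lemma packStart_pieceLength_inlₗ (i : ι) :
    packStart (pieceLength k ℓ) (Sum.inlₗ i) = packStart k i := by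
  simp only [packStart, Finset.sum_filter]
  rw [← Equiv.sum_comp toLex, Fintype.sum_sum_type]
  simp [pieceLength, Sum.inlₗ]

/-- The processors permanently assigned to task `i`: consecutive blocks of sizes `k j`, numbered
from processor `0`. -/
def reserved (k : ι → ℕ) (m : ℕ) (i : ι) : Finset (Fin m) :=
  {p | packStart k i ≤ p ∧ p < packStart k i + k i}

lemma mem_reserved {i : ι} {p : Fin m} : p ∈ reserved k m i ↔ (p : ℕ) ∈ packInterval k i :=
  Finset.mem_filter_univ p

lemma disjoint_reserved {i j : ι} (hij : i ≠ j) : Disjoint (reserved k m i) (reserved k m j) :=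
  Finset.disjoint_left.2 fun _ hi hj =>
    (pairwise_disjoint_packInterval (f := k) zero_le hij).le_bot
      ⟨mem_reserved.1 hi, mem_reserved.1 hj⟩

lemma card_reserved (hk : ∑ i, k i ≤ m) (i : ι) : (reserved k m i).card = k i := by
  have hmap : (reserved k m i).map Fin.valEmbedding
      = Finset.Ico (packStart k i) (packStart k i + k i) := by
    ext q
    have := packStart_add_le_sum (f := k) zero_le i
    simp only [Finset.mem_map, mem_reserved, Fin.valEmbedding_apply, Finset.mem_Ico]
    exact ⟨fun ⟨_, hp, hpq⟩ => hpq ▸ hp, fun hq => ⟨⟨q, by lia⟩, hq, rfl⟩⟩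
  rw [← Finset.card_map, hmap, Nat.card_Ico, Nat.add_sub_cancel_left]

/-- The wrap-around schedule of the static and dynamic pieces, with each piece attributed to its
task. -/
noncomputable def staticSchedule (k : ι → ℕ) (ℓ : ι → ℝ) (m : ℕ) (s : ℝ) (p : Fin m) : Option ι :=
  (wrapAround (pieceLength k ℓ) m s p).map fun x => Sum.elim id id (ofLex x)

lemma staticSchedule_periodic (k : ι → ℕ) (ℓ : ι → ℝ) (m : ℕ) :
    Function.Periodic (staticSchedule k ℓ m) 1 :=
  fun s => funext fun p => by
    simp only [staticSchedule, wrapAround_periodic (pieceLength k ℓ) m s]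

lemma measurable_staticSchedule [MeasurableSpace (Option ι)] (hℓ : 0 ≤ ℓ) :
    Measurable (staticSchedule k ℓ m) := by
  let _ : MeasurableSpace (Option (ι ⊕ₗ ι)) := ⊤
  exact measurable_pi_iff.2 fun p => measurable_from_top.comp <|
    measurable_pi_iff.1 (measurable_wrapAround (pieceLength_nonneg hℓ)) p

lemma wrapAround_pieceLength_eq_some_inlₗ_iff (hℓ : 0 ≤ ℓ) {s : ℝ} {p : Fin m} {i : ι} :
    wrapAround (pieceLength k ℓ) m s p = some (Sum.inlₗ i) ↔ p ∈ reserved k m i :=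
  (wrapAround_eq_some_iff_of_natCast (pieceLength_nonneg hℓ) (packStart_pieceLength_inlₗ i)
    rfl).trans mem_reserved.symm

lemma staticSchedule_eq_some_iff (hℓ : 0 ≤ ℓ) {s : ℝ} {p : Fin m} {i : ι} :
    staticSchedule k ℓ m s p = some i ↔
      p ∈ reserved k m i ∨ wrapAround (pieceLength k ℓ) m s p = some (Sum.inrₗ i) := by
  rw [← wrapAround_pieceLength_eq_some_inlₗ_iff hℓ, staticSchedule, Option.map_eq_some_iff]
  constructor
  · rintro ⟨_ | _, hx, rfl⟩
    exacts [.inl hx, .inr hx]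
  · rintro (hx | hx) <;> exact ⟨_, hx, rfl⟩

lemma staticSchedule_of_mem_reserved (hℓ : 0 ≤ ℓ) (s : ℝ) {p : Fin m} {i : ι}
    (hp : p ∈ reserved k m i) : staticSchedule k ℓ m s p = some i :=
  (staticSchedule_eq_some_iff hℓ).2 (.inl hp)

lemma card_wrapAround_pieceLength_inrₗ (hℓ0 : 0 ≤ ℓ) (hsum : ∑ i, (k i + ℓ i) ≤ m) {i : ι}
    (hℓ1 : ℓ i ≤ 1) (s : ℝ) :
    ({p | wrapAround (pieceLength k ℓ) m s p = some (Sum.inrₗ i)} : Finset (Fin m)).card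
      = if Int.fract (s - packStart (pieceLength k ℓ) (Sum.inrₗ i)) < ℓ i then 1 else 0 :=
  card_wrapAround_eq_of_le_one (i := Sum.inrₗ i) (pieceLength_nonneg hℓ0)
    (sum_pieceLength.trans_le hsum) hℓ1 s

lemma card_staticSchedule_eq (hℓ0 : 0 ≤ ℓ) (hsum : ∑ i, (k i + ℓ i) ≤ m) {i : ι} (hℓ1 : ℓ i ≤ 1)
    (s : ℝ) :
    ({p | staticSchedule k ℓ m s p = some i} : Finset (Fin m)).card
      = k i + if Int.fract (s - packStart (pieceLength k ℓ) (Sum.inrₗ i)) < ℓ i then 1 else 0 := by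
  have hdisj : Disjoint (reserved k m i)
      ({p | wrapAround (pieceLength k ℓ) m s p = some (Sum.inrₗ i)} : Finset (Fin m)) := by
    refine Finset.disjoint_left.2 fun p hp hp' => ?_
    rw [← wrapAround_pieceLength_eq_some_inlₗ_iff hℓ0 (s := s)] at hp
    simp [hp] at hp'
  rw [← card_wrapAround_pieceLength_inrₗ hℓ0 hsum hℓ1,
    ← card_reserved (sum_le_of_sum_add_le hℓ0 hsum),
    ← Finset.card_union_of_disjoint hdisj]
  congr 1
  ext p
  simp [staticSchedule_eq_some_iff hℓ0]

lemma card_unreserved_staticSchedule_le_one (hℓ0 : 0 ≤ ℓ) (hsum : ∑ i, (k i + ℓ i) ≤ m) {i : ι}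
    (hℓ1 : ℓ i ≤ 1) (s : ℝ) :
    ({p | p ∉ Finset.univ.biUnion (reserved k m) ∧ staticSchedule k ℓ m s p = some i} :
      Finset (Fin m)).card ≤ 1 := by
  calc
    _ ≤ ({p | wrapAround (pieceLength k ℓ) m s p = some (Sum.inrₗ i)} : Finset (Fin m)).card := by
      refine Finset.card_le_card (Finset.monotone_filter_right _ fun p _ ⟨hp, hi⟩ => ?_)
      refine ((staticSchedule_eq_some_iff hℓ0).1 hi).resolve_left fun hpi => hp ?_
      exact Finset.mem_biUnion.2 ⟨i, Finset.mem_univ i, hpi⟩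
    _ ≤ 1 := by
      rw [card_wrapAround_pieceLength_inrₗ hℓ0 hsum hℓ1]
      split_ifs <;> simp

end StaticSchedule

section PeriodicIntegral

variable {E : Type*} [NormedAddCommGroup E] (A D : E) (b l : ℝ)

lemma intervalIntegrable_ite_fract_sub_lt (x y : ℝ) :
    IntervalIntegrable (fun s => if Int.fract (s - b) < l then D else A) volume x y := by
  have hmeas : StronglyMeasurable fun s => if Int.fract (s - b) < l then D else A :=
    .ite (measurableSet_lt (measurable_id.sub_const b).fract measurable_const)
      stronglyMeasurable_const stronglyMeasurable_const
  refine intervalIntegrable_iff.2 <| Measure.integrableOn_of_bounded (M := max ‖D‖ ‖A‖) (by simp)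
    hmeas.aestronglyMeasurable (.of_forall fun s => ?_)
  split_ifs <;> simp

variable {b l} [NormedSpace ℝ E] [CompleteSpace E]

lemma intervalIntegral_ite_fract_sub_lt (hl0 : 0 ≤ l) (hl1 : l ≤ 1) :
    ∫ s in b..(b + 1), (if Int.fract (s - b) < l then D else A) = l • D + (1 - l) • A := by
  have hfract {s : ℝ} (h0 : b < s) (h1 : s < b + 1) : Int.fract (s - b) = s - b :=
    Int.fract_eq_self.2 ⟨by linarith, by linarith⟩
  have hactive : ∫ s in b..(b + l), (if Int.fract (s - b) < l then D else A) = l • D := by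
    trans ∫ _ in b..(b + l), D
    · refine intervalIntegral.integral_congr_Ioo_of_le (by linarith) fun _ ⟨h0, h1⟩ => ?_
      simp only [hfract h0 (by linarith), if_pos (sub_lt_iff_lt_add'.2 h1)]
    · simp
  have hidle : ∫ s in (b + l)..(b + 1), (if Int.fract (s - b) < l then D else A)
      = (1 - l) • A := by
    trans ∫ _ in (b + l)..(b + 1), A
    · refine intervalIntegral.integral_congr_Ioo_of_le (by linarith) fun _ ⟨h0, h1⟩ => ?_
      simp only [hfract (by linarith) h1, if_neg (lt_sub_iff_add_lt'.2 h0).not_gt]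
    · simp
  rw [← hactive, ← hidle, intervalIntegral.integral_add_adjacent_intervals] <;>
    exact intervalIntegrable_ite_fract_sub_lt ..

lemma setIntegral_Ico_ite_fract_sub_lt (hl0 : 0 ≤ l) (hl1 : l ≤ 1) (t : ℝ) (T : ℕ) :
    ∫ s in Set.Ico t (t + T), (if Int.fract (s - b) < l then D else A)
      = T • (l • D + (1 - l) • A) := by
  have hper : Function.Periodic (fun s => if Int.fract (s - b) < l then D else A) 1 := fun s => by
    simp only [add_sub_right_comm, Int.fract_add_one]
  have hwindow := hper.intervalIntegral_add_zsmul_eq T t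
    (intervalIntegrable_ite_fract_sub_lt A D b l)
  simp only [zsmul_eq_mul, Int.cast_natCast, mul_one] at hwindow
  rw [integral_Ico_eq_integral_Ioc, ← intervalIntegral.integral_of_le (by simp), hwindow,
    hper.intervalIntegral_add_eq t b, intervalIntegral_ite_fract_sub_lt A D hl0 hl1,
    natCast_zsmul]

end PeriodicIntegral

lemma lt_and_le_succ_of_eq_findGreatest {α : Type*} [LinearOrder α] {γ : ℕ → α} {u : α} {k m : ℕ}
    (h0 : γ 0 < u) (hm : u ≤ γ m)
    (hk : k = if u ≤ γ 1 then 0 else Nat.findGreatest (fun j => γ j < u) m) :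
    γ k < u ∧ u ≤ γ (k + 1) := by
  split_ifs at hk with h1
  · exact hk ▸ ⟨h0, h1⟩
  · have hlt : γ k < u := hk ▸ Nat.findGreatest_spec (P := fun j => γ j < u) (Nat.zero_le m) h0
    have hkm : k < m :=
      lt_of_le_of_ne (hk ▸ Nat.findGreatest_le m) fun h => (h ▸ hlt).not_ge hm
    exact ⟨hlt, not_lt.1 (Nat.findGreatest_is_greatest (hk.symm.trans_lt k.lt_succ_self) hkm)⟩

lemma div_sub_mul_add_one_sub_mul {K : Type*} [Field K] {a b : K} (hab : a ≠ b) (u : K) :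
    (u - a) / (b - a) * b + (1 - (u - a) / (b - a)) * a = u := by
  have := sub_ne_zero.2 hab.symm
  field_simp
  ring

lemma setIntegral_speed_staticSchedule {ι : Type*} [Fintype ι] [LinearOrder ι] {k : ι → ℕ}
    {ℓ : ι → ℝ} {m : ℕ} (hℓ0 : 0 ≤ ℓ) (hsum : ∑ i, (k i + ℓ i) ≤ m) {i : ι} (hℓ1 : ℓ i ≤ 1)
    (γ : ℕ → ℝ) (t : ℝ) (T : ℕ) :
    ∫ s in Set.Ico t (t + T), γ ({p | staticSchedule k ℓ m s p = some i} : Finset (Fin m)).card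
      = T * (ℓ i * γ (k i + 1) + (1 - ℓ i) * γ (k i)) := by
  simp only [card_staticSchedule_eq hℓ0 hsum hℓ1, apply_ite (k i + ·), apply_ite γ, add_zero]
  rw [setIntegral_Ico_ite_fract_sub_lt _ _ (hℓ0 i) hℓ1, nsmul_eq_mul, smul_eq_mul, smul_eq_mul]

theorem stmt9_general (n m : ℕ) (γ : Fin n → ℕ → ℝ)
    (h0 : ∀ i, γ i 0 = 0)
    (T : Fin n → ℕ) (hT : ∀ i, 1 ≤ T i)
    (C : Fin n → ℝ) (hC : ∀ i, 0 < C i)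
    (u : Fin n → ℝ) (hu : ∀ i, u i = C i / (T i : ℝ))
    (hum : ∀ i, u i ≤ γ i m)
    (k : Fin n → ℕ)
    (hk : ∀ i, k i = if u i ≤ γ i 1 then 0
      else Nat.findGreatest (fun j => γ i j < u i) m)
    (ℓ : Fin n → ℝ)
    (hℓ : ∀ i, ℓ i = (u i - γ i (k i)) / (γ i (k i + 1) - γ i (k i)))
    (hfeas : ∑ i, ((k i : ℝ) + ℓ i) ≤ (m : ℝ)) :
    ∃ (S : Fin n → Finset (Fin m)) (σ : ℝ → Fin m → Option (Fin n)),
      (∀ i i', i ≠ i' → Disjoint (S i) (S i')) ∧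
      (∀ i, (S i).card = k i) ∧
      Measurable σ ∧
      (∀ s : ℝ, σ (s + 1) = σ s) ∧
      (∀ i, ∀ s : ℝ, ∀ p ∈ S i, σ s p = some i) ∧
      (∀ i, ∀ s : ℝ,
        (Finset.univ.filter
          (fun p => p ∉ Finset.univ.biUnion S ∧ σ s p = some i)).card ≤ 1) ∧
      (∀ i, ∀ t : ℝ, ∫ s in Set.Ico t (t + (T i : ℝ)),
        γ i ((Finset.univ.filter (fun p => σ s p = some i)).card) = C i) := by
  have hTpos (i) : 0 < (T i : ℝ) := Nat.cast_pos.2 (hT i)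
  have hupos (i) : γ i 0 < u i := by rw [h0, hu]; exact div_pos (hC i) (hTpos i)
  have hbracket (i) := lt_and_le_succ_of_eq_findGreatest (hupos i) (hum i) (hk i)
  have hℓmem (i) : ℓ i ∈ unitInterval := by
    obtain ⟨hlt, hle⟩ := hbracket i
    exact hℓ i ▸ unitInterval.div_mem (by linarith) (by linarith) (by linarith)
  have hℓ0 : 0 ≤ ℓ := fun i => (hℓmem i).1
  refine ⟨reserved k m, staticSchedule k ℓ m, fun i i' => disjoint_reserved,
    card_reserved (sum_le_of_sum_add_le hℓ0 hfeas), measurable_staticSchedule hℓ0,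
    staticSchedule_periodic k ℓ m, fun i s p => staticSchedule_of_mem_reserved hℓ0 s,
    fun i => card_unreserved_staticSchedule_le_one hℓ0 hfeas (hℓmem i).2, fun i t => ?_⟩
  rw [setIntegral_speed_staticSchedule hℓ0 hfeas (hℓmem i).2, hℓ,
    div_sub_mul_add_one_sub_mul ((hbracket i).1.trans_le (hbracket i).2).ne, hu,
    mul_div_cancel₀ _ (hTpos i).ne']

/-- Reduction with static processor assignment, limiting
migrations: if `∑ λᵢ ≤ m`, there are pairwise disjoint sets `Sᵢ` of processors
with `|Sᵢ| = kᵢ` and a 1-periodic measurable schedule in which task `i` runs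
permanently on all processors of `Sᵢ`, uses at most one processor outside
`S₁ ∪ ⋯ ∪ Sₙ` at any time, and receives at least `Cᵢ` units of execution in
every window `[t, t + Tᵢ)`. -/
theorem stmt9 (n m : ℕ) (hn : 1 ≤ n) (hm : 1 ≤ m)
    (γ : Fin n → ℕ → ℝ)
    (h0 : ∀ i, γ i 0 = 0)
    (hmono : ∀ i, ∀ j : ℕ, j < m → γ i j < γ i (j + 1))
    (hratio : ∀ i, ∀ j j' : ℕ, 1 ≤ j → j < j' → j' ≤ m →
      γ i j' / γ i j < (j' : ℝ) / (j : ℝ))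
    (hconv : ∀ i, ∀ j j' : ℕ, 1 ≤ j → j < j' → j' < m →
      γ i (j' + 1) - γ i j' ≤ γ i (j + 1) - γ i j)
    (T : Fin n → ℕ) (hT : ∀ i, 1 ≤ T i)
    (C : Fin n → ℝ) (hC : ∀ i, 0 < C i)
    (u : Fin n → ℝ) (hu : ∀ i, u i = C i / (T i : ℝ))
    (hum : ∀ i, u i ≤ γ i m)
    (k : Fin n → ℕ)
    (hk : ∀ i, k i = if u i ≤ γ i 1 then 0
      else Nat.findGreatest (fun j => γ i j < u i) m)
    (ℓ : Fin n → ℝ)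
    (hℓ : ∀ i, ℓ i = (u i - γ i (k i)) / (γ i (k i + 1) - γ i (k i)))
    (lam : Fin n → ℝ)
    (hlam : ∀ i, lam i = (k i : ℝ) + ℓ i)
    (hfeas : ∑ i, lam i ≤ (m : ℝ)) :
    ∃ (S : Fin n → Finset (Fin m)) (σ : ℝ → Fin m → Option (Fin n)),
      (∀ i i', i ≠ i' → Disjoint (S i) (S i')) ∧
      (∀ i, (S i).card = k i) ∧
      Measurable σ ∧
      (∀ s : ℝ, σ (s + 1) = σ s) ∧
      (∀ i, ∀ s : ℝ, ∀ p ∈ S i, σ s p = some i) ∧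
      (∀ i, ∀ s : ℝ,
        (Finset.univ.filter
          (fun p => p ∉ Finset.univ.biUnion S ∧ σ s p = some i)).card ≤ 1) ∧
      (∀ i, ∀ t : ℝ, C i ≤ ∫ s in Set.Ico t (t + (T i : ℝ)),
        γ i ((Finset.univ.filter (fun p => σ s p = some i)).card)) := by
  simp only [hlam] at hfeas
  obtain ⟨S, σ, hdisj, hcard, hmeas, hper, hstatic, hone, hwork⟩ :=
    stmt9_general n m γ h0 T hT C hC u hu hum k hk ℓ hℓ hfeas
  exact ⟨S, σ, hdisj, hcard, hmeas, hper, hstatic, hone, fun i t => (hwork i t).ge⟩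
end
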